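/- arXiv:2410.11170 — 2 statements merged into one kernel-verified Lean document; each statement's English description precedes it below -/
import Mathlib

section
/- Fix α ∈ ℝ \ {0} and A > 0. Define, for x ∈ ℝ³ off the x₃-axis (polar angle θ ∈ (0,π)), the (−1)-homogeneous vector field u = (1/r)( U_θ(θ) e_θ + U_r(θ) e_r ) and (−2)-homogeneous pressure p = (U_r(θ) − U_θ(θ)²/2)/r², where U_θ(θ) = (2/sinθ)( −cosθ + α (A cot^{2α}(θ/2) − 1)/(A cot^{2α}(θ/2) + 1) ) and U_r(θ) = −2 + (8α²/sin²θ) · A cot^{2α}(θ/2)/(1 + A cot^{2α}(θ/2))². Then (u,p) is a (−1)-homogeneous axisymmetric no-swirl solution of the stationary Navier–Stokes equations on ℝ³ minus the x₃-axis. -/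
noncomputable section

open Real Filter MeasureTheory Metric Topology
open scoped ENNReal InnerProductSpace

abbrev V3 := EuclideanSpace ℝ (Fin 3)
abbrev V2 := EuclideanSpace ℝ (Fin 2)

/-- standard basis vector in `ℝ³` -/
def e3 (j : Fin 3) : V3 := EuclideanSpace.single j 1

/-- partial derivative `∂_j f` -/
def pd (j : Fin 3) (f : V3 → ℝ) (x : V3) : ℝ := fderiv ℝ f x (e3 j)

/-- Laplacian on `ℝ³` -/
def lap3 (f : V3 → ℝ) (x : V3) : ℝ := ∑ j, pd j (fun y => pd j f y) x

/-- stationary Navier–Stokes equations `-Δu + (u·∇)u + ∇p = 0`, `div u = 0` at `x` -/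
def NSEq (u : V3 → V3) (p : V3 → ℝ) (x : V3) : Prop :=
  (∀ i, - lap3 (fun z => u z i) x + (∑ j, u x j * pd j (fun z => u z i) x) + pd i p x = 0)
  ∧ (∑ j, pd j (fun z => u z j) x) = 0

/-- stationary Euler equations `(u·∇)u + ∇p = 0`, `div u = 0` at `x` -/
def EulerEq (u : V3 → V3) (p : V3 → ℝ) (x : V3) : Prop :=
  (∀ i, (∑ j, u x j * pd j (fun z => u z i) x) + pd i p x = 0)
  ∧ (∑ j, pd j (fun z => u z j) x) = 0

/-- south pole -/
def S3 : V3 := EuclideanSpace.single 2 (-1)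
/-- north pole -/
def N3 : V3 := EuclideanSpace.single 2 1

/-- the unit sphere `S²` -/
def sphere2 : Set V3 := Metric.sphere (0 : V3) 1

/-- the open cone over a subset of the unit sphere -/
def cone3 (Ω : Set V3) : Set V3 := {x : V3 | x ≠ 0 ∧ (‖x‖⁻¹ • x) ∈ Ω}

/-- `|x'| = √(x₁² + x₂²)` -/
def rho (x : V3) : ℝ := Real.sqrt ((x 0) ^ 2 + (x 1) ^ 2)

/-- the `x₃`-axis `{x' = 0}` -/
def axis3 : Set V3 := {x : V3 | x 0 = 0 ∧ x 1 = 0}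

/-- `Ω_{a,b,R} = {a < x₃ < b, |x'| < R}` -/
def OmegaR (a b R : ℝ) : Set V3 := {x : V3 | a < x 2 ∧ x 2 < b ∧ rho x < R}

/-- build a point of `ℝ³` from `x' ∈ ℝ²` and `x₃ ∈ ℝ` -/
def emb (y : V2) (t : ℝ) : V3 := (EuclideanSpace.equiv (Fin 3) ℝ).symm ![y 0, y 1, t]

/-- spherical component `u_r = u · e_r` -/
def uRc (u : V3 → V3) (x : V3) : ℝ := (u x 0 * x 0 + u x 1 * x 1 + u x 2 * x 2) / ‖x‖

/-- spherical component `u_θ = u · e_θ` -/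
def uTc (u : V3 → V3) (x : V3) : ℝ :=
  (u x 0 * x 0 * x 2 + u x 1 * x 1 * x 2) / (‖x‖ * rho x) - u x 2 * rho x / ‖x‖

/-- spherical component `u_φ = u · e_φ` -/
def uPc (u : V3 → V3) (x : V3) : ℝ := (-(u x 0) * x 1 + u x 1 * x 0) / rho x

/-- axisymmetry on a set: the spherical components are independent of the meridian angle -/
def AxisymOn (u : V3 → V3) (Ω : Set V3) : Prop :=
  ∀ x ∈ Ω, ∀ y ∈ Ω, ‖x‖ = ‖y‖ → x 2 = y 2 →
    uRc u x = uRc u y ∧ uTc u x = uTc u y ∧ uPc u x = uPc u y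

/-- spherical frame vector `e_r` -/
def eRv (x : V3) : V3 := ‖x‖⁻¹ • x

/-- spherical frame vector `e_θ` -/
def eThv (x : V3) : V3 := (EuclideanSpace.equiv (Fin 3) ℝ).symm
  ![x 2 * x 0 / (‖x‖ * rho x), x 2 * x 1 / (‖x‖ * rho x), -(rho x) / ‖x‖]

/-- spherical frame vector `e_φ` -/
def ePhv (x : V3) : V3 := (EuclideanSpace.equiv (Fin 3) ℝ).symm ![-(x 1) / rho x, x 0 / rho x, 0]

/-- the spherical cap `S² ∩ B_δ(S) \ {S}` -/
def NSCap (δ : ℝ) : Set V3 := (sphere2 ∩ Metric.ball S3 δ) \ {S3}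

/-- the spherical cap `S² ∩ B_δ(S)` -/
def NSCapFull (δ : ℝ) : Set V3 := sphere2 ∩ Metric.ball S3 δ

/-- `cot(θ/2)^(2α)` in Cartesian variables. -/
def cot2a (α : ℝ) (x : V3) : ℝ := ((‖x‖ + x 2) / rho x) ^ (2 * α)

/-- `u_θ` component (times nothing) of the solution of Example 3.2 (a). -/
def Utheta17 (α A : ℝ) (x : V3) : ℝ :=
  (2 * ‖x‖ / rho x) * (-(x 2 / ‖x‖) + α * (A * cot2a α x - 1) / (A * cot2a α x + 1))

/-- `u_r` component of the solution of Example 3.2 (a). -/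
def Ur17 (α A : ℝ) (x : V3) : ℝ :=
  -2 + (8 * α ^ 2 * ‖x‖ ^ 2 / (rho x) ^ 2) * (A * cot2a α x) / (1 + A * cot2a α x) ^ 2

/-- the explicit velocity field of Example 3.2 (a). -/
def u17 (α A : ℝ) (x : V3) : V3 :=
  ‖x‖⁻¹ • (Utheta17 α A x • eThv x + Ur17 α A x • eRv x)

/-- the explicit pressure of Example 3.2 (a). -/
def p17 (α A : ℝ) (x : V3) : ℝ := (Ur17 α A x - (Utheta17 α A x) ^ 2 / 2) / ‖x‖ ^ 2

/-- polynomial expressions in the six atoms `x₀, x₁, x₂, 1/r, 1/ρ², T` -/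
inductive PE where
  | c (a : ℝ) : PE
  | v (i : Fin 6) : PE
  | add (a b : PE) : PE
  | mul (a b : PE) : PE

/-- evaluation of an expression -/
def PE.ev (w : Fin 6 → ℝ) : PE → ℝ
  | .c a => a
  | .v i => w i
  | .add a b => a.ev w + b.ev w
  | .mul a b => a.ev w * b.ev w

/-- formal derivative of an expression -/
def PE.d (w : Fin 6 → PE) : PE → PE
  | .c _ => .c 0
  | .v i => w i
  | .add a b => .add (a.d w) (b.d w)
  | .mul a b => .add (.mul a (b.d w)) (.mul b (a.d w))

/-- the function `T` -/
def Tf (α A : ℝ) (x : V3) : ℝ := (A * cot2a α x - 1) / (A * cot2a α x + 1)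

/-- the atoms -/
def atoms (α A : ℝ) (x : V3) : Fin 6 → ℝ :=
  ![x 0, x 1, x 2, ‖x‖⁻¹, ((x 0) ^ 2 + (x 1) ^ 2)⁻¹, Tf α A x]

/-- `1 - T²` as an expression -/
def oneT : PE := .add (.c 1) (.mul (.c (-1)) (.mul (.v 5) (.v 5)))

/-- formal derivatives of the atoms -/
def dat (α : ℝ) : Fin 3 → Fin 6 → PE :=
  ![![.c 1, .c 0, .c 0, .mul (.c (-1)) (.mul (.v 0) (.mul (.v 3) (.mul (.v 3) (.v 3)))),
      .mul (.c (-2)) (.mul (.v 0) (.mul (.v 4) (.v 4))),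
      .mul (.c (-α)) (.mul oneT (.mul (.v 2) (.mul (.v 0) (.mul (.v 3) (.v 4)))))],
    ![.c 0, .c 1, .c 0, .mul (.c (-1)) (.mul (.v 1) (.mul (.v 3) (.mul (.v 3) (.v 3)))),
      .mul (.c (-2)) (.mul (.v 1) (.mul (.v 4) (.v 4))),
      .mul (.c (-α)) (.mul oneT (.mul (.v 2) (.mul (.v 1) (.mul (.v 3) (.v 4)))))],
    ![.c 0, .c 0, .c 1, .mul (.c (-1)) (.mul (.v 2) (.mul (.v 3) (.mul (.v 3) (.v 3)))),
      .c 0,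
      .mul (.c α) (.mul oneT (.v 3))]]

/-- total derivative assembled from partials -/
def grd (g : Fin 3 → ℝ) : V3 →L[ℝ] ℝ :=
  ∑ j, g j • (EuclideanSpace.proj j : V3 →L[ℝ] ℝ)

lemma grd_apply (g : Fin 3 → ℝ) (v : V3) : grd g v = g 0 * v 0 + g 1 * v 1 + g 2 * v 2 := by
  simp [grd, Fin.sum_univ_three]

lemma grd_e3 (g : Fin 3 → ℝ) (j : Fin 3) : grd g (e3 j) = g j := by
  rw [grd_apply]; fin_cases j <;> simp [e3]

lemma HasFDerivAt.to_grd {f : V3 → ℝ} {f' : V3 →L[ℝ] ℝ} {x : V3} (h : HasFDerivAt f f' x)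
    (g : Fin 3 → ℝ) (hg : ∀ v, f' v = g 0 * v 0 + g 1 * v 1 + g 2 * v 2) :
    HasFDerivAt f (grd g) x := by
  have : f' = grd g := by ext v; rw [hg, grd_apply]
  rwa [← this]

lemma hd_inv {f : V3 → ℝ} {f' : V3 →L[ℝ] ℝ} {x : V3} (h : HasFDerivAt f f' x) (hf : f x ≠ 0) :
    HasFDerivAt (fun y => (f y)⁻¹) (-((f x)⁻¹ ^ 2) • f') x := by
  rw [inv_pow]
  exact
    (hasDerivAt_inv hf).comp_hasFDerivAt x h

lemma rho_sq (x : V3) : rho x ^ 2 = (x 0) ^ 2 + (x 1) ^ 2 := Real.sq_sqrt (by positivity)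

lemma s_pos {x : V3} (hx : rho x ≠ 0) : 0 < (x 0) ^ 2 + (x 1) ^ 2 := by
  rw [← rho_sq]; positivity

lemma rho_pos {x : V3} (hx : rho x ≠ 0) : 0 < rho x :=
  lt_of_le_of_ne (Real.sqrt_nonneg _) (Ne.symm hx)

lemma nrm_sq (x : V3) : ‖x‖ ^ 2 = (x 0) ^ 2 + (x 1) ^ 2 + (x 2) ^ 2 := by
  rw [EuclideanSpace.norm_sq_eq]; simp [Fin.sum_univ_three]

lemma nrm_pos {x : V3} (hx : rho x ≠ 0) : 0 < ‖x‖ := by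
  have := s_pos hx
  have h2 := nrm_sq x
  have h3 : 0 < ‖x‖ ^ 2 := by nlinarith [sq_nonneg (x 2)]
  exact lt_of_le_of_ne (norm_nonneg _) (fun h => by rw [← h] at h3; simp at h3)

lemma rz_pos {x : V3} (hx : rho x ≠ 0) : 0 < ‖x‖ + x 2 := by
  have h1 := s_pos hx
  have h2 := nrm_sq x
  have h3 := nrm_pos hx
  by_contra h
  nlinarith

lemma cot_pos (α : ℝ) {x : V3} (hx : rho x ≠ 0) : 0 < cot2a α x :=
  Real.rpow_pos_of_pos (div_pos (rz_pos hx) (rho_pos hx)) _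

lemma cot_eq (α : ℝ) {x : V3} (hx : rho x ≠ 0) : cot2a α x =
    Real.exp (2 * α * (Real.log (‖x‖ + x 2) - Real.log ((x 0) ^ 2 + (x 1) ^ 2) / 2)) := by
  rw [cot2a, Real.rpow_def_of_pos (div_pos (rz_pos hx) (rho_pos hx)),
    Real.log_div (rz_pos hx).ne' hx, rho, Real.log_sqrt (s_pos hx).le]
  ring_nf

lemma ev_off {x : V3} (hx : rho x ≠ 0) : ∀ᶠ y in 𝓝 x, rho y ≠ 0 := by
  have : Continuous rho := by unfold rho; fun_prop
  exact this.continuousAt.eventually_ne hx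

lemma hd_coord (i : Fin 3) (x : V3) :
    HasFDerivAt (fun y : V3 => y i) (EuclideanSpace.proj i : V3 →L[ℝ] ℝ) x :=
  (EuclideanSpace.proj i : V3 →L[ℝ] ℝ).hasFDerivAt

lemma hd_s (x : V3) : HasFDerivAt (fun y : V3 => (y 0) ^ 2 + (y 1) ^ 2)
    (grd ![2 * x 0, 2 * x 1, 0]) x := by
  refine (((hd_coord 0 x).pow 2).add ((hd_coord 1 x).pow 2)).to_grd _ ?_
  intro v; simp

lemma hd_r {x : V3} (hx : rho x ≠ 0) : HasFDerivAt (fun y : V3 => ‖y‖)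
    (grd ![x 0 * ‖x‖⁻¹, x 1 * ‖x‖⁻¹, x 2 * ‖x‖⁻¹]) x := by
  have e : (fun y : V3 => ‖y‖) = fun y => Real.sqrt ((y 0) ^ 2 + (y 1) ^ 2 + (y 2) ^ 2) := by
    ext y; rw [← nrm_sq, Real.sqrt_sq (norm_nonneg _)]
  have h0 : (x 0) ^ 2 + (x 1) ^ 2 + (x 2) ^ 2 ≠ 0 := by
    have := nrm_pos hx
    rw [← nrm_sq]; positivity
  have h := (((hd_s x).add ((hd_coord 2 x).pow 2)).sqrt h0)
  have e2 : Real.sqrt ((x 0) ^ 2 + (x 1) ^ 2 + (x 2) ^ 2) = ‖x‖ := by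
    rw [← nrm_sq, Real.sqrt_sq (norm_nonneg _)]
  rw [e]
  refine h.to_grd _ ?_
  intro v
  have := (nrm_pos hx).ne'
  simp [grd_apply, e2]
  ring

lemma hd_L {x : V3} (hx : rho x ≠ 0) : HasFDerivAt
    (fun y : V3 => Real.log (‖y‖ + y 2) - Real.log ((y 0) ^ 2 + (y 1) ^ 2) / 2)
    (grd ![-(x 2 * x 0 * ‖x‖⁻¹ * ((x 0) ^ 2 + (x 1) ^ 2)⁻¹),
      -(x 2 * x 1 * ‖x‖⁻¹ * ((x 0) ^ 2 + (x 1) ^ 2)⁻¹), ‖x‖⁻¹]) x := by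
  have h1 := ((hd_r hx).add (hd_coord 2 x)).log (rz_pos hx).ne'
  have h2 := ((hd_s x).log (s_pos hx).ne').mul_const (1 / 2)
  have h3 := h1.sub h2
  have h4 : HasFDerivAt
    (fun y : V3 => Real.log (‖y‖ + y 2) - Real.log ((y 0) ^ 2 + (y 1) ^ 2) / 2) _ x :=
    h3.congr_of_eventuallyEq (Eventually.of_forall fun y => by simp; ring)
  refine h4.to_grd _ ?_
  intro v
  have a1 := (nrm_pos hx).ne'
  have a2 := (rz_pos hx).ne'
  have a3 := (s_pos hx).ne'
  have a4 := nrm_sq x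
  simp [grd_apply]
  generalize ‖x‖ = r at *
  generalize x 0 = a at *
  generalize x 1 = b at *
  generalize x 2 = z at *
  field_simp
  linear_combination (-(a * v 0 + b * v 1)) * a4

lemma hd_T (α A : ℝ) (hA : 0 < A) {x : V3} (hx : rho x ≠ 0) : HasFDerivAt (Tf α A)
    (grd ![-α * ((1 - Tf α A x ^ 2) * (x 2 * x 0 * ‖x‖⁻¹ * ((x 0) ^ 2 + (x 1) ^ 2)⁻¹)),
      -α * ((1 - Tf α A x ^ 2) * (x 2 * x 1 * ‖x‖⁻¹ * ((x 0) ^ 2 + (x 1) ^ 2)⁻¹)),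
      α * ((1 - Tf α A x ^ 2) * ‖x‖⁻¹)]) x := by
  have hG : HasFDerivAt (cot2a α) _ x :=
    (((hd_L hx).const_mul (2 * α)).exp).congr_of_eventuallyEq
      ((ev_off hx).mono fun y hy => cot_eq α hy)
  have hp := cot_pos α hx
  have hne : A * cot2a α x + 1 ≠ 0 := by positivity
  have h := ((hG.const_mul A).sub_const 1).mul (hd_inv ((hG.const_mul A).add_const 1) hne)
  have h' : HasFDerivAt (Tf α A) _ x := h
  refine h'.to_grd _ ?_
  intro v
  simp only [← cot_eq α hx, Tf]
  simp [grd_apply]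
  generalize cot2a α x = G at *
  field_simp
  ring

lemma hd_atoms (α A : ℝ) (hA : 0 < A) {x : V3} (hx : rho x ≠ 0) (i : Fin 6) :
    HasFDerivAt (fun y => atoms α A y i) (grd fun j => (dat α j i).ev (atoms α A x)) x := by
  have a1 := (nrm_pos hx).ne'
  have a3 := (s_pos hx).ne'
  fin_cases i
  · refine (hd_coord 0 x).to_grd _ ?_
    intro v; simp [dat, PE.ev]
  · refine (hd_coord 1 x).to_grd _ ?_
    intro v; simp [dat, PE.ev]
  · refine (hd_coord 2 x).to_grd _ ?_
    intro v; simp [dat, PE.ev]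
  · refine (hd_inv (hd_r hx) a1).to_grd _ ?_
    intro v; simp [dat, PE.ev, atoms, grd_apply]; ring
  · refine (hd_inv (hd_s x) a3).to_grd _ ?_
    intro v; simp [dat, PE.ev, atoms, grd_apply]; field_simp; ring
  · refine (hd_T α A hA hx).to_grd _ ?_
    intro v; simp [dat, PE.ev, atoms, grd_apply, oneT]; ring

lemma hd_ev (α A : ℝ) (hA : 0 < A) {x : V3} (hx : rho x ≠ 0) (P : PE) :
    HasFDerivAt (fun y => P.ev (atoms α A y))
      (grd fun j => (P.d (dat α j)).ev (atoms α A x)) x := by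
  induction P with
  | c a =>
    refine (hasFDerivAt_const a x).to_grd _ ?_
    intro v; simp [PE.d, PE.ev]
  | v i => exact hd_atoms α A hA hx i
  | add a b iha ihb =>
    refine (iha.add ihb).to_grd _ ?_
    intro v; simp [PE.d, PE.ev, grd_apply]; ring
  | mul a b iha ihb =>
    refine (iha.mul ihb).to_grd _ ?_
    intro v; simp [PE.d, PE.ev, grd_apply]; ring

lemma pd_ev (α A : ℝ) (hA : 0 < A) {x : V3} (hx : rho x ≠ 0) (P : PE) (f : V3 → ℝ)
    (hf : ∀ y, rho y ≠ 0 → f y = P.ev (atoms α A y)) (j : Fin 3) :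
    pd j f x = (P.d (dat α j)).ev (atoms α A x) := by
  have h := (hd_ev α A hA hx P).congr_of_eventuallyEq ((ev_off hx).mono fun y hy => hf y hy)
  rw [pd, h.fderiv, grd_e3]

lemma lap_ev (α A : ℝ) (hA : 0 < A) {x : V3} (hx : rho x ≠ 0) (P : PE) (f : V3 → ℝ)
    (hf : ∀ y, rho y ≠ 0 → f y = P.ev (atoms α A y)) :
    lap3 f x = ∑ j, ((P.d (dat α j)).d (dat α j)).ev (atoms α A x) := by
  rw [lap3]
  refine Finset.sum_congr rfl fun j _ => ?_
  exact pd_ev α A hA hx _ _ (fun y hy => pd_ev α A hA hy P f hf j) j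

/-- the bracket `-2 + 2αTz/r + 2α²(1-T²)` -/
def bE (α : ℝ) : PE := .add (.c (-2)) (.add (.mul (.c (2 * α)) (.mul (.v 5) (.mul (.v 2) (.v 3))))
  (.mul (.c (2 * α ^ 2)) oneT))

/-- velocity components as expressions -/
def uE (α : ℝ) : Fin 3 → PE := ![.mul (.v 0) (.mul (.v 4) (bE α)), .mul (.v 1) (.mul (.v 4) (bE α)),
  .add (.mul (.c (-2 * α)) (.mul (.v 5) (.v 3)))
    (.mul (.c (2 * α ^ 2)) (.mul oneT (.mul (.v 2) (.v 4))))]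

/-- `-z/r + αT` -/
def mE (α : ℝ) : PE := .add (.mul (.c (-1)) (.mul (.v 2) (.v 3))) (.mul (.c α) (.v 5))

/-- pressure as an expression -/
def pE (α : ℝ) : PE := .add (.mul (.c (-2)) (.mul (.v 3) (.v 3)))
  (.add (.mul (.c (2 * α ^ 2)) (.mul oneT (.v 4))) (.mul (.c (-2)) (.mul (.v 4) (.mul (mE α) (mE α)))))

lemma one_sub_T (α A : ℝ) (hA : 0 < A) {x : V3} (hx : rho x ≠ 0) :
    (A * cot2a α x) / (1 + A * cot2a α x) ^ 2 = (1 - Tf α A x ^ 2) / 4 := by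
  have hp := cot_pos α hx
  have hne : A * cot2a α x + 1 ≠ 0 := by positivity
  have hne' : 1 + A * cot2a α x ≠ 0 := by positivity
  rw [Tf]
  generalize A * cot2a α x = G at *
  field_simp
  ring

lemma Ur_eq (α A : ℝ) (hA : 0 < A) {x : V3} (hx : rho x ≠ 0) :
    Ur17 α A x = -2 + 2 * α ^ 2 * ‖x‖ ^ 2 * (rho x ^ 2)⁻¹ * (1 - Tf α A x ^ 2) := by
  rw [Ur17, mul_div_assoc, one_sub_T α A hA hx]
  ring

lemma Ut_eq (α A : ℝ) (x : V3) :
    Utheta17 α A x = (2 * ‖x‖ / rho x) * (-(x 2 / ‖x‖) + α * Tf α A x) := by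
  rw [Utheta17, Tf, mul_div_assoc α]

lemma u_eq (α A : ℝ) (hA : 0 < A) (i : Fin 3) {x : V3} (hx : rho x ≠ 0) :
    u17 α A x i = (uE α i).ev (atoms α A x) := by
  have a1 := (nrm_pos hx).ne'
  have a3 := nrm_sq x
  rw [← rho_sq] at a3
  fin_cases i <;>
  · simp [u17, Ur_eq α A hA hx, Ut_eq, eThv, eRv, uE, bE, oneT, PE.ev, atoms]
    rw [← rho_sq]
    generalize Tf α A x = T at *
    generalize ‖x‖ = r at *
    generalize rho x = ρ at *
    generalize x 0 = a at *
    generalize x 1 = b at *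
    generalize x 2 = z at *
    field_simp
    first
    | ring1
    | (have a4 : ρ ^ 2 = r ^ 2 - z ^ 2 := by linarith
       rw [a4]; ring1)

lemma p_eq (α A : ℝ) (hA : 0 < A) {x : V3} (hx : rho x ≠ 0) :
    p17 α A x = (pE α).ev (atoms α A x) := by
  have a1 := (nrm_pos hx).ne'
  simp [p17, Ur_eq α A hA hx, Ut_eq, pE, mE, oneT, PE.ev, atoms]
  rw [← rho_sq]
  generalize Tf α A x = T at *
  generalize ‖x‖ = r at *
  generalize rho x = ρ at *
  generalize x 2 = z at *
  field_simp
  ring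

lemma rels {x : V3} (hx : rho x ≠ 0) :
    ((x 0) ^ 2 + (x 1) ^ 2)⁻¹ * ((x 0) ^ 2 + (x 1) ^ 2) - 1 = 0 ∧
    ‖x‖⁻¹ ^ 2 * ((x 0) ^ 2 + (x 1) ^ 2 + (x 2) ^ 2) - 1 = 0 := by
  have a1 := (nrm_pos hx).ne'
  have a3 := (s_pos hx).ne'
  constructor
  · field_simp; ring
  · rw [← nrm_sq]; field_simp; ring

lemma mom_ev (α A : ℝ) {x : V3} (hx : rho x ≠ 0) (i : Fin 3) :
    - (∑ j, (((uE α i).d (dat α j)).d (dat α j)).ev (atoms α A x))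
    + (∑ j, (uE α j).ev (atoms α A x) * ((uE α i).d (dat α j)).ev (atoms α A x))
    + ((pE α).d (dat α i)).ev (atoms α A x) = 0 := by
  obtain ⟨h1, h2⟩ := rels hx
  simp only [atoms]
  generalize Tf α A x = T at *
  generalize ((x 0) ^ 2 + (x 1) ^ 2)⁻¹ = s at *
  generalize ‖x‖⁻¹ = q at *
  generalize x 0 = x0 at *
  generalize x 1 = x1 at *
  generalize x 2 = x2 at *
  have h3 : s * x2 ^ 2 * q ^ 2 - s + q ^ 2 = 0 := by
    linear_combination s * h2 - q ^ 2 * h1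
  fin_cases i
  · simp [Fin.sum_univ_three, uE, bE, pE, mE, oneT, PE.d, PE.ev, dat]
    linear_combination ((-6)*x0*x2*q^5*T*α + (-4)*x0*x2*q^3*s*T*α + (-6)*x0*x2^2*q^4*s*α^2 + (2)*x0*x2^2*q^4*s*T^2*α^2 + (8)*x0*s^2 + (-8)*x0*x2^2*q^2*s^2*α^2 + (-8)*x0*s^2*α^4 + (16)*x0*s^2*T^2*α^4 + (8)*x0*x2*q*s^2*T*α^5 + (-16)*x0*x2*q*s^2*T^3*α^5 + (-8)*x0*s^2*T^4*α^4 + (8)*x0*x2*q*s^2*T^5*α^5) * h1 + (0) * h2 + ((-4)*x0*s*α^2 + (-6)*x0*x2*q^3*T*α + (-4)*x0*x2*q*s*T*α^3 + (4)*x0*s*α^4 + (-8)*x0*s*T^2*α^4 + (4)*x0*x2*q*s*T^3*α^3 + (4)*x0*s*T^4*α^4 + (4)*x0*q^2 + (4)*x0*s) * h3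
  · simp [Fin.sum_univ_three, uE, bE, pE, mE, oneT, PE.d, PE.ev, dat]
    linear_combination ((-6)*x1*x2*q^5*T*α + (-4)*x1*x2*q^3*s*T*α + (-6)*x1*x2^2*q^4*s*α^2 + (2)*x1*x2^2*q^4*s*T^2*α^2 + (8)*x1*s^2 + (-8)*x1*x2^2*q^2*s^2*α^2 + (-8)*x1*s^2*α^4 + (16)*x1*s^2*T^2*α^4 + (8)*x1*x2*q*s^2*T*α^5 + (-16)*x1*x2*q*s^2*T^3*α^5 + (-8)*x1*s^2*T^4*α^4 + (8)*x1*x2*q*s^2*T^5*α^5) * h1 + (0) * h2 + ((-4)*x1*s*α^2 + (-6)*x1*x2*q^3*T*α + (-4)*x1*x2*q*s*T*α^3 + (4)*x1*s*α^4 + (-8)*x1*s*T^2*α^4 + (4)*x1*x2*q*s*T^3*α^3 + (4)*x1*s*T^4*α^4 + (4)*x1*q^2 + (4)*x1*s) * h3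
  · simp [Fin.sum_univ_three, uE, bE, pE, mE, oneT, PE.d, PE.ev, dat]
    linear_combination ((6)*x2*q^4*α^2 + (-2)*x2*q^4*T^2*α^2 + (-8)*x2*s^2*α^2 + (8)*x2*s^2*T^2*α^2 + (8)*x2^2*q*s^2*T*α^3 + (-8)*x2^2*q*s^2*T^3*α^3 + (4)*x2^3*q^2*s^2*α^4 + (-8)*x2^3*q^2*s^2*T^2*α^4 + (4)*x2^3*q^2*s^2*T^4*α^4 + (4)*x2^2*q^3*s*T*α^3 + (-4)*x2^2*q^3*s*T^3*α^3 + (-4)*q^3*T*α + (4)*q^3*T*α^3 + (-8)*x2*s^2*α^4 + (16)*x2*s^2*T^2*α^4 + (4)*x2*q^2*s*α^4 + (-8)*x2*q^2*s*T^2*α^4 + (8)*x2^2*q*s^2*T*α^5 + (-16)*x2^2*q*s^2*T^3*α^5 + (-4)*q^3*T^3*α^3 + (-8)*x2*s^2*T^4*α^4 + (4)*x2*q^2*s*T^4*α^4 + (8)*x2^2*q*s^2*T^5*α^5) * h1 + ((6)*q^3*T*α) * h2 + ((4)*x2*q^2 + (-4)*q*T*α + (4)*x2*s*α^4 + (-8)*x2*s*T^2*α^4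 + (4)*x2*s*T^4*α^4 + (4)*q*T*α^3 + (-4)*q*T^3*α^3) * h3

lemma div_ev (α A : ℝ) {x : V3} (hx : rho x ≠ 0) :
    ∑ j, ((uE α j).d (dat α j)).ev (atoms α A x) = 0 := by
  obtain ⟨h1, h2⟩ := rels hx
  simp only [atoms]
  generalize Tf α A x = T at *
  generalize ((x 0) ^ 2 + (x 1) ^ 2)⁻¹ = s at *
  generalize ‖x‖⁻¹ = q at *
  generalize x 0 = x0 at *
  generalize x 1 = x1 at *
  generalize x 2 = x2 at *
  have h3 : s * x2 ^ 2 * q ^ 2 - s + q ^ 2 = 0 := by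
    linear_combination s * h2 - q ^ 2 * h1
  simp [Fin.sum_univ_three, uE, bE, oneT, PE.d, PE.ev, dat]
  linear_combination ((-2)*x2*q^3*T*α + (-4)*x2*q*s*T*α + (4)*s + (-4)*s*α^2 + (4)*s*T^2*α^2 + (-2)*x2^2*q^2*s*α^2 + (2)*x2^2*q^2*s*T^2*α^2 + (4)*x2*q*s*T*α^3 + (-4)*x2*q*s*T^3*α^3) * h1 + (0) * h2 + ((-2)*α^2 + (2)*T^2*α^2) * h3

lemma ns_part (α A : ℝ) (hA : 0 < A) {x : V3} (hx : rho x ≠ 0) :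
    NSEq (u17 α A) (p17 α A) x := by
  constructor
  · intro i
    rw [lap_ev α A hA hx (uE α i) _ (fun y hy => u_eq α A hA i hy),
      pd_ev α A hA hx (pE α) _ (fun y hy => p_eq α A hA hy)]
    rw [← mom_ev α A hx i]
    congr 2
    refine Finset.sum_congr rfl fun j _ => ?_
    rw [pd_ev α A hA hx (uE α i) _ (fun y hy => u_eq α A hA i hy), u_eq α A hA j hx]
  · rw [← div_ev α A hx]
    refine Finset.sum_congr rfl fun j _ => ?_
    rw [pd_ev α A hA hx (uE α j) _ (fun y hy => u_eq α A hA j hy)]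

lemma rho_smul (x : V3) {l : ℝ} (hl : 0 < l) : rho (l • x) = l * rho x := by
  have : (l • x) 0 ^ 2 + (l • x) 1 ^ 2 = l ^ 2 * (x 0 ^ 2 + x 1 ^ 2) := by simp; ring
  rw [rho, this, Real.sqrt_mul (by positivity), Real.sqrt_sq hl.le, rho]

lemma Tf_smul (α A : ℝ) (x : V3) {l : ℝ} (hl : 0 < l) : Tf α A (l • x) = Tf α A x := by
  have : cot2a α (l • x) = cot2a α x := by
    rw [cot2a, cot2a, rho_smul x hl, norm_smul, Real.norm_of_nonneg hl.le]
    congr 1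
    simp only [PiLp.smul_apply, smul_eq_mul]
    rw [← mul_add, mul_div_mul_left _ _ hl.ne']
  rw [Tf, Tf, this]

lemma hom_part (α A : ℝ) (hA : 0 < A) {x : V3} (hx : rho x ≠ 0) {l : ℝ} (hl : 0 < l) :
    u17 α A (l • x) = l⁻¹ • u17 α A x ∧ p17 α A (l • x) = (l ^ 2)⁻¹ * p17 α A x := by
  have hx' : rho (l • x) ≠ 0 := by rw [rho_smul x hl]; positivity
  have hs : ((l • x) 0 ^ 2 + (l • x) 1 ^ 2)⁻¹ = (l ^ 2)⁻¹ * (x 0 ^ 2 + x 1 ^ 2)⁻¹ := by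
    rw [← mul_inv]; congr 1; simp; ring
  have ha : atoms α A (l • x) = ![l * x 0, l * x 1, l * x 2, l⁻¹ * ‖x‖⁻¹,
      (l ^ 2)⁻¹ * ((x 0) ^ 2 + (x 1) ^ 2)⁻¹, Tf α A x] := by
    rw [atoms, hs, Tf_smul α A x hl, norm_smul, Real.norm_of_nonneg hl.le, mul_inv]
    simp
  constructor
  · ext i
    rw [PiLp.smul_apply, u_eq α A hA i hx', u_eq α A hA i hx, ha, atoms]
    generalize ((x 0) ^ 2 + (x 1) ^ 2)⁻¹ = s
    generalize ‖x‖⁻¹ = q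
    fin_cases i <;> simp [uE, bE, oneT, PE.ev] <;> field_simp
  · rw [p_eq α A hA hx', p_eq α A hA hx, ha, atoms]
    generalize ((x 0) ^ 2 + (x 1) ^ 2)⁻¹ = s
    generalize ‖x‖⁻¹ = q
    simp [pE, mE, oneT, PE.ev]
    field_simp

lemma phi_part (α A : ℝ) (hA : 0 < A) {x : V3} (hx : rho x ≠ 0) : uPc (u17 α A) x = 0 := by
  rw [uPc, u_eq α A hA 0 hx, u_eq α A hA 1 hx]
  simp [uE, PE.ev, atoms]
  left
  ring

lemma axi_part (α A : ℝ) (hA : 0 < A) : AxisymOn (u17 α A) {x : V3 | rho x ≠ 0} := by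
  intro x hx y hy hn hz
  have hx : rho x ≠ 0 := hx
  have hy : rho y ≠ 0 := hy
  have hs : (x 0) ^ 2 + (x 1) ^ 2 = (y 0) ^ 2 + (y 1) ^ 2 := by
    have h1 := nrm_sq x
    have h2 := nrm_sq y
    rw [hn, hz] at h1
    linarith
  have hr : rho x = rho y := by rw [rho, rho, hs]
  have hT : Tf α A x = Tf α A y := by rw [Tf, Tf, cot2a, cot2a, hn, hz, hr]
  have hb : (bE α).ev (atoms α A x) = (bE α).ev (atoms α A y) := by
    simp [bE, oneT, PE.ev, atoms, hn, hz, hT]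
  have h2 : u17 α A x 2 = u17 α A y 2 := by
    rw [u_eq α A hA 2 hx, u_eq α A hA 2 hy]
    simp [uE, oneT, PE.ev, atoms, hn, hz, hT, hs]
  have key : u17 α A x 0 * x 0 + u17 α A x 1 * x 1 = u17 α A y 0 * y 0 + u17 α A y 1 * y 1 := by
    have gen : ∀ w : V3, rho w ≠ 0 → u17 α A w 0 * w 0 + u17 α A w 1 * w 1 =
        ((w 0) ^ 2 + (w 1) ^ 2) * (((w 0) ^ 2 + (w 1) ^ 2)⁻¹ * (bE α).ev (atoms α A w)) := by
      intro w hw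
      rw [u_eq α A hA 0 hw, u_eq α A hA 1 hw]
      have e0 : (uE α 0).ev (atoms α A w) =
        w 0 * (((w 0) ^ 2 + (w 1) ^ 2)⁻¹ * (bE α).ev (atoms α A w)) := rfl
      have e1 : (uE α 1).ev (atoms α A w) =
        w 1 * (((w 0) ^ 2 + (w 1) ^ 2)⁻¹ * (bE α).ev (atoms α A w)) := rfl
      rw [e0, e1]; ring
    rw [gen x hx, gen y hy, hs, hb]
  refine ⟨?_, ?_, ?_⟩
  · rw [uRc, uRc, key, h2, hn, hz]
  · rw [uTc, uTc, ← add_mul, ← add_mul, key, h2, hn, hz, hr]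
  · rw [phi_part α A hA hx, phi_part α A hA hy]

/-- the explicit pair `(u17, p17)` is a `(-1)`-homogeneous axisymmetric
no-swirl solution of Navier–Stokes off the `x₃`-axis. -/
theorem explicit_liouville_solution (α A : ℝ) (hα : α ≠ 0) (hA : 0 < A) :
    (∀ x : V3, rho x ≠ 0 → NSEq (u17 α A) (p17 α A) x) ∧
    (∀ x : V3, rho x ≠ 0 → ∀ lam : ℝ, 0 < lam →
      u17 α A (lam • x) = lam⁻¹ • u17 α A x ∧ p17 α A (lam • x) = (lam ^ 2)⁻¹ * p17 α A x) ∧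
    AxisymOn (u17 α A) {x : V3 | rho x ≠ 0} ∧
    (∀ x : V3, rho x ≠ 0 → uPc (u17 α A) x = 0) := by
  exact ⟨fun x hx => ns_part α A hA hx, fun x hx l hl => hom_part α A hA hx hl,
    axi_part α A hA, fun x hx => phi_part α A hA hx⟩
end
end

section
/- Suppose ξ ∈ C²(ℝ² \ {0}) is radially symmetric (ξ(z) depends only on |z|) and satisfies −Δξ = e^ξ at every point of ℝ² \ {0}. Then there exist constants A > 0 and c > 0 such that ξ(z) = ln( 2c² A |z|^{c−2} / (1 + A|z|^c)² ) for all z ∈ ℝ² \ {0}. -/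
noncomputable section

open Real Filter MeasureTheory Metric Topology
open scoped ENNReal InnerProductSpace

/-- standard basis vector in `ℝ²` -/
def e2 (j : Fin 2) : V2 := EuclideanSpace.single j 1

/-- partial derivative on `ℝ²` -/
def pd2 (j : Fin 2) (f : V2 → ℝ) (x : V2) : ℝ := fderiv ℝ f x (e2 j)

/-- Laplacian on `ℝ²` -/
def lap2 (f : V2 → ℝ) (x : V2) : ℝ := ∑ j, pd2 j (fun y => pd2 j f y) x

lemma ode_aux (w p : ℝ → ℝ) (hw : ∀ t, HasDerivAt w (p t) t)
    (hp : ∀ t, HasDerivAt p (-Real.exp (w t)) t) :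
    ∃ A c : ℝ, 0 < A ∧ 0 < c ∧ ∀ t, Real.exp (w t) =
      2 * c ^ 2 * (A * Real.exp (c * t)) / (1 + A * Real.exp (c * t)) ^ 2 := by
  have hE : ∀ t, p t ^ 2 + 2 * Real.exp (w t) = p 0 ^ 2 + 2 * Real.exp (w 0) := by
    intro t
    have hd : ∀ s, HasDerivAt (fun s => p s ^ 2 + 2 * Real.exp (w s)) 0 s := by
      intro s
      have h := ((hp s).pow 2).add (((hw s).exp).const_mul 2)
      refine HasDerivAt.congr_deriv h ?_
      norm_num
      ring
    exact is_const_of_deriv_eq_zero (fun s => (hd s).differentiableAt) (fun s => (hd s).deriv) t 0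
  set K := p 0 ^ 2 + 2 * Real.exp (w 0) with hK
  have hKpos : 0 < K := by positivity
  obtain ⟨c, hc, hcK⟩ : ∃ c : ℝ, 0 < c ∧ c ^ 2 = K :=
    ⟨Real.sqrt K, Real.sqrt_pos.2 hKpos, Real.sq_sqrt hKpos.le⟩
  have hlt : ∀ t, |p t| < c := by
    intro t
    apply abs_lt_of_sq_lt_sq _ hc.le
    have := hE t
    have := Real.exp_pos (w t)
    linarith
  have h1 : ∀ t, 0 < c + p t := fun t => by linarith [(abs_lt.1 (hlt t)).1]
  have h2 : ∀ t, 0 < c - p t := fun t => by linarith [(abs_lt.1 (hlt t)).2]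
  have hy : ∀ t, (c - p t) / (c + p t) * Real.exp (-(c * t)) =
      (c - p 0) / (c + p 0) := by
    intro t
    have hd : ∀ s, HasDerivAt (fun s => (c - p s) / (c + p s) * Real.exp (-(c * s))) 0 s := by
      intro s
      have hne := (h1 s).ne'
      have h := (((hp s).const_sub c).div ((hp s).const_add c) hne).mul
        (((hasDerivAt_id s).const_mul c).neg.exp)
      refine HasDerivAt.congr_deriv h ?_
      have e : Real.exp (w s) = (c ^ 2 - p s ^ 2) / 2 := by linarith [hE s]
      simp only [Pi.div_apply, id, Pi.neg_apply, e]
      field_simp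
      ring
    have := is_const_of_deriv_eq_zero (fun s => (hd s).differentiableAt)
      (fun s => (hd s).deriv) t 0
    simpa using this
  refine ⟨(c - p 0) / (c + p 0), c, div_pos (h2 0) (h1 0), hc, fun t => ?_⟩
  have hA : (c - p 0) / (c + p 0) * Real.exp (c * t) = (c - p t) / (c + p t) := by
    rw [← hy t, mul_assoc, ← Real.exp_add]
    simp
  rw [hA]
  have e : Real.exp (w t) = (c ^ 2 - p t ^ 2) / 2 := by linarith [hE t]
  have hne := (h1 t).ne'
  have : 1 + (c - p t) / (c + p t) = 2 * c / (c + p t) := by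
    field_simp
    ring
  rw [this, e]
  field_simp
  ring

lemma norm_sq_V2 (z : V2) : ‖z‖ ^ 2 = z 0 ^ 2 + z 1 ^ 2 := by
  rw [EuclideanSpace.norm_sq_eq]
  simp

lemma coord_hasFDerivAt (j : Fin 2) (z : V2) :
    HasFDerivAt (fun y : V2 => y j) (EuclideanSpace.proj j : V2 →L[ℝ] ℝ) z :=
  (EuclideanSpace.proj j : V2 →L[ℝ] ℝ).hasFDerivAt

lemma nsq_hasFDerivAt (z : V2) :
    HasFDerivAt (fun y : V2 => ‖y‖ ^ 2) (2 • innerSL ℝ z) z :=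
  (hasStrictFDerivAt_norm_sq z).hasFDerivAt

lemma radial_pd (g g' : ℝ → ℝ) (hg : ∀ t, HasDerivAt g (g' t) t) (z : V2) (hz : z ≠ 0)
    (j : Fin 2) :
    HasFDerivAt (fun y : V2 => g (Real.log (‖y‖ ^ 2) / 2))
      ((g' (Real.log (‖z‖ ^ 2) / 2) / ‖z‖ ^ 2) • innerSL ℝ z) z := by
  have hn : ‖z‖ ^ 2 ≠ 0 := by simpa using hz
  have h := (hg (Real.log (‖z‖ ^ 2) / 2)).comp_hasFDerivAt z
    (((nsq_hasFDerivAt z).log hn).mul_const (2⁻¹ : ℝ))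
  refine h.congr_fderiv ?_
  ext v
  simp
  field_simp

lemma lap_radial (g g' g'' : ℝ → ℝ) (hg : ∀ t, HasDerivAt g (g' t) t)
    (hg' : ∀ t, HasDerivAt g' (g'' t) t) (ξ : V2 → ℝ)
    (hξ : ∀ z : V2, z ≠ 0 → ξ z = g (Real.log (‖z‖ ^ 2) / 2)) (z : V2) (hz : z ≠ 0) :
    lap2 ξ z = g'' (Real.log (‖z‖ ^ 2) / 2) / ‖z‖ ^ 2 := by
  have hn : ‖z‖ ^ 2 ≠ 0 := by simpa using hz
  have hnh : ∀ y : V2, y ≠ 0 → ∀ᶠ x in 𝓝 y, x ≠ 0 := fun y hy =>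
    isOpen_ne.mem_nhds hy
  have hpd : ∀ j, ∀ y : V2, y ≠ 0 →
      pd2 j ξ y = g' (Real.log (‖y‖ ^ 2) / 2) * (y j * (‖y‖ ^ 2)⁻¹) := by
    intro j y hy
    have h1 : HasFDerivAt ξ _ y := (radial_pd g g' hg y hy j).congr_of_eventuallyEq
      ((hnh y hy).mono fun x hx => hξ x hx)
    rw [pd2, h1.fderiv]
    simp [e2, EuclideanSpace.inner_single_right]
    ring
  have hpd2 : ∀ j, pd2 j (fun y => pd2 j ξ y) z =
      g'' (Real.log (‖z‖ ^ 2) / 2) * z j ^ 2 / (‖z‖ ^ 2) ^ 2 +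
      g' (Real.log (‖z‖ ^ 2) / 2) * (1 / ‖z‖ ^ 2 - 2 * z j ^ 2 / (‖z‖ ^ 2) ^ 2) := by
    intro j
    have h0 := (radial_pd g' g'' hg' z hz j).mul ((coord_hasFDerivAt j z).mul
      ((hasDerivAt_inv hn).comp_hasFDerivAt z (nsq_hasFDerivAt z)))
    have h1 : HasFDerivAt (fun y => pd2 j ξ y) _ z := h0.congr_of_eventuallyEq
      ((hnh z hz).mono fun x hx => hpd j x hx)
    rw [pd2, h1.fderiv]
    simp [e2, EuclideanSpace.inner_single_right]
    field_simp
    ring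
  rw [lap2, Fin.sum_univ_two, hpd2, hpd2]
  have := norm_sq_V2 z
  set N := ‖z‖ ^ 2
  field_simp
  rw [this]
  ring

/-- classification of radial solutions of the Liouville equation on `ℝ² \ {0}`. -/
theorem radial_liouville_classification (ξ : V2 → ℝ)
    (hreg : ContDiffOn ℝ 2 ξ {z : V2 | z ≠ 0})
    (hrad : ∀ z w : V2, ‖z‖ = ‖w‖ → ξ z = ξ w)
    (heq : ∀ z : V2, z ≠ 0 → - lap2 ξ z = Real.exp (ξ z)) :
    ∃ A c : ℝ, 0 < A ∧ 0 < c ∧ ∀ z : V2, z ≠ 0 →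
      ξ z = Real.log (2 * c ^ 2 * A * ‖z‖ ^ (c - 2) / (1 + A * ‖z‖ ^ c) ^ 2) := by
  set γ : ℝ → V2 := fun t => Real.exp t • e2 0 with hγ
  have hγn : ∀ t, ‖γ t‖ = Real.exp t := by
    intro t
    simp [hγ, e2, norm_smul]
  have hγ0 : ∀ t, γ t ≠ 0 := by
    intro t h
    have := hγn t
    rw [h, norm_zero] at this
    exact (Real.exp_pos t).ne this
  have hγd : ContDiff ℝ 2 γ := Real.contDiff_exp.smul contDiff_const
  set g : ℝ → ℝ := fun t => ξ (γ t) with hgdef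
  have hgd : ContDiff ℝ 2 g := by
    rw [← contDiffOn_univ]
    exact hreg.comp hγd.contDiffOn (fun t _ => hγ0 t)
  have hg : ∀ t, HasDerivAt g (deriv g t) t := fun t =>
    (hgd.differentiable (by norm_num) t).hasDerivAt
  have hgd' : ContDiff ℝ 1 (deriv g) := by
    have : ContDiff ℝ (1 + 1) g := by
      convert hgd using 1
      norm_num
    exact (contDiff_succ_iff_deriv.1 this).2.2
  have hg' : ∀ t, HasDerivAt (deriv g) (deriv (deriv g) t) t := fun t =>
    (hgd'.differentiable (by norm_num) t).hasDerivAt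
  have hlog : ∀ z : V2, z ≠ 0 → Real.exp (Real.log (‖z‖ ^ 2) / 2) = ‖z‖ := by
    intro z hz
    rw [Real.log_pow]
    simp [Real.exp_log (norm_pos_iff.2 hz)]
  have hξ : ∀ z : V2, z ≠ 0 → ξ z = g (Real.log (‖z‖ ^ 2) / 2) := by
    intro z hz
    apply hrad
    rw [hγn, hlog z hz]
  have hlap := lap_radial g _ _ hg hg' ξ hξ
  obtain ⟨A, c, hA, hc, h⟩ := ode_aux (fun t => g t + 2 * t) (fun t => deriv g t + 2)
    (fun t => HasDerivAt.congr_deriv ((hg t).add ((hasDerivAt_id t).const_mul 2)) (by norm_num))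
    (fun t => by
      have h1 := heq (γ t) (hγ0 t)
      rw [hlap _ (hγ0 t), hγn, ← Real.exp_nat_mul, Real.log_exp] at h1
      have h2 : ((2 : ℕ) : ℝ) * t / 2 = t := by norm_num
      rw [h2] at h1
      have h3 : deriv (deriv g) t = - Real.exp (g t + 2 * t) := by
        rw [Real.exp_add]
        change _ = - (Real.exp (ξ (γ t)) * _)
        rw [← h1]
        norm_num
      rw [← h3]
      exact (hg' t).add_const 2)
  refine ⟨A, c, hA, hc, fun z hz => ?_⟩
  have hzp := norm_pos_iff.2 hz
  have hl : Real.log (‖z‖ ^ 2) / 2 = Real.log ‖z‖ := by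
    rw [Real.log_pow]
    norm_num
  have h1 := h (Real.log ‖z‖)
  have hpow : Real.exp (c * Real.log ‖z‖) = ‖z‖ ^ c := by
    rw [Real.rpow_def_of_pos hzp, mul_comm]
  have hsq : Real.exp (2 * Real.log ‖z‖) = ‖z‖ ^ 2 := by
    rw [mul_comm, Real.exp_mul, Real.exp_log hzp]
    norm_num
  rw [hpow, Real.exp_add, hsq, ← hl, ← hξ z hz] at h1
  rw [← Real.log_exp (ξ z)]
  congr 1
  rw [eq_div_iff (by positivity)] at h1 ⊢
  have h2 : ‖z‖ ^ (c - 2) = ‖z‖ ^ c / ‖z‖ ^ 2 := by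
    rw [Real.rpow_sub hzp]
    norm_num
  rw [h2]
  field_simp
  linarith
end
end
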